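/- Let (X,ρ) be a metric space, C ⊆ X nonempty closed, θ ∈ C with B(θ,M) ∩ C compact for all M > 0, and T : C → C a continuous paracontraction with a fixed point. If {x_t} ⊆ C satisfies x_{t+1} = T(x_t) for all t, then {x_t} converges to a fixed point of T. -/

import Mathlib

/-!
The distances from an orbit to any fixed point decrease, so the orbit is bounded and has a cluster
point `a`. The distance to a fixed point `z` takes the same value at `a` and at `T a`, namely its
limit along the orbit, so strictness forces `T a = a`. Now the distances from the orbit to `a`
decrease too, and since they are frequently small, they tend to `0`.
-/

open Filter Function Metric Topology

theorem eq_of_mapClusterPt_of_tendsto {X Y ι : Type*} [TopologicalSpace X] [TopologicalSpace Y]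
    [T2Space Y] {l : Filter ι} {u : ι → X} {s : Set X} {a : X} {g : X → Y} {b : Y}
    (ha : MapClusterPt a l u) (hg : ContinuousWithinAt g s a) (hu : ∀ᶠ i in l, u i ∈ s)
    (hb : Tendsto (g ∘ u) l (𝓝 b)) : g a = b := by
  have : NeBot (𝓝 a ⊓ map u l) := ha
  have hle : 𝓝 a ⊓ map u l ≤ 𝓝[s] a := inf_le_inf_left _ (le_principal_iff.2 hu)
  have hb' : Tendsto g (map u l) (𝓝 b) := tendsto_map'_iff.2 hb
  exact tendsto_nhds_unique (hg.mono_left hle) (hb'.mono_left inf_le_right)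

theorem exists_mapClusterPt_of_isBounded_range {X ι : Type*} [PseudoMetricSpace X] {C : Set X}
    {θ : X} {l : Filter ι} [NeBot l] {x : ι → X}
    (hcomp : ∀ M > 0, IsCompact (closedBall θ M ∩ C)) (hx : ∀ i, x i ∈ C)
    (hbdd : Bornology.IsBounded (Set.range x)) : ∃ a ∈ C, MapClusterPt a l x := by
  obtain ⟨M, hM, hsub⟩ := hbdd.subset_closedBall_lt 0 θ
  have hmem (i : ι) : x i ∈ closedBall θ M ∩ C := ⟨hsub (Set.mem_range_self i), hx i⟩
  have hle : map x l ≤ 𝓟 (closedBall θ M ∩ C) :=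
    tendsto_principal.2 (Eventually.of_forall hmem)
  obtain ⟨a, ha, hclu⟩ := (hcomp M hM).exists_mapClusterPt hle
  exact ⟨a, ha.2, hclu⟩

/-- A sequence (or any family indexed by a preorder) is Fejér monotone with respect to `F` if it
never moves away from any point of `F`. -/
def FejerMonotone {X ι : Type*} [PseudoMetricSpace X] [Preorder ι] (F : Set X) (x : ι → X) :
    Prop :=
  ∀ z ∈ F, Antitone fun i ↦ dist z (x i)

namespace FejerMonotone

variable {X ι : Type*} [PseudoMetricSpace X] [Preorder ι] {F : Set X} {x : ι → X} {z : X}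

theorem exists_tendsto_dist (h : FejerMonotone F x) (hz : z ∈ F) :
    ∃ d, Tendsto (fun i ↦ dist z (x i)) atTop (𝓝 d) :=
  ⟨_, tendsto_atTop_ciInf (h z hz) ⟨0, Set.forall_mem_range.2 fun _ ↦ dist_nonneg⟩⟩

theorem tendsto_of_mapClusterPt (h : FejerMonotone F x) (hz : z ∈ F)
    (hclu : MapClusterPt z atTop x) : Tendsto x atTop (𝓝 z) := by
  refine Metric.tendsto_nhds.2 fun ε hε ↦ ?_
  obtain ⟨i, hi⟩ := (hclu.frequently (ball_mem_nhds z hε)).exists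
  filter_upwards [eventually_ge_atTop i] with j hij
  exact mem_ball'.2 ((h z hz hij).trans_lt (mem_ball'.1 hi))

theorem isBounded_range [OrderBot ι] (h : FejerMonotone F x) (hF : F.Nonempty) :
    Bornology.IsBounded (Set.range x) := by
  obtain ⟨z, hz⟩ := hF
  refine (isBounded_iff_subset_closedBall z).2 ⟨dist z (x ⊥), ?_⟩
  exact Set.range_subset_iff.2 fun i ↦ mem_closedBall'.2 (h z hz bot_le)

end FejerMonotone

/-- `T` is a paracontraction on `C`: applying it to a point of `C` never increases the distance to
a fixed point in `C`, and decreases it unless the point is itself fixed. That `T` maps `C` into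
itself is not part of the definition. -/
def IsParacontractionOn {X : Type*} [PseudoMetricSpace X] (T : X → X) (C : Set X) : Prop :=
  ∀ z ∈ C, IsFixedPt T z → ∀ x ∈ C,
    dist z (T x) ≤ dist z x ∧ (¬IsFixedPt T x → dist z (T x) < dist z x)

namespace IsParacontractionOn

variable {X : Type*} [PseudoMetricSpace X] {T : X → X} {C : Set X} {x : ℕ → X} {a : X}

theorem fejerMonotone (hT : IsParacontractionOn T C) (hx : ∀ t, x t ∈ C)
    (hstep : ∀ t, x (t + 1) = T (x t)) : FejerMonotone (C ∩ fixedPoints T) x := by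
  refine fun z hz ↦ antitone_nat_of_succ_le fun t ↦ ?_
  rw [hstep]
  exact (hT z hz.1 hz.2 (x t) (hx t)).1

theorem isFixedPt_of_mapClusterPt (hT : IsParacontractionOn T C)
    (hfix : (C ∩ fixedPoints T).Nonempty) (hx : ∀ t, x t ∈ C) (hstep : ∀ t, x (t + 1) = T (x t))
    (ha : a ∈ C) (hcont : ContinuousWithinAt T C a) (hclu : MapClusterPt a atTop x) :
    IsFixedPt T a := by
  obtain ⟨z, hz⟩ := hfix
  obtain ⟨d, hd⟩ := (hT.fejerMonotone hx hstep).exists_tendsto_dist hz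
  have hd' : Tendsto (fun t ↦ dist z (T (x t))) atTop (𝓝 d) := by
    simpa only [hstep] using (tendsto_add_atTop_iff_nat 1).2 hd
  have hxC : ∀ᶠ t in atTop, x t ∈ C := Eventually.of_forall hx
  have hza : dist z a = d :=
    eq_of_mapClusterPt_of_tendsto (g := dist z) hclu (by fun_prop) hxC hd
  have hzTa : dist z (T a) = d :=
    eq_of_mapClusterPt_of_tendsto (g := fun y ↦ dist z (T y)) hclu (by fun_prop) hxC hd'
  by_contra hne
  exact ((hT z hz.1 hz.2 a ha).2 hne).ne (hzTa.trans hza.symm)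

end IsParacontractionOn

theorem stmt_13_general {X : Type*} [PseudoMetricSpace X] {C : Set X} {θ : X}
    (hcomp : ∀ M > (0 : ℝ), IsCompact (closedBall θ M ∩ C)) {T : X → X}
    (hTcont : ContinuousOn T C) (hpara : IsParacontractionOn T C)
    (hfix : (C ∩ fixedPoints T).Nonempty) {x : ℕ → X} (hx : ∀ t, x t ∈ C)
    (hstep : ∀ t, x (t + 1) = T (x t)) :
    ∃ a ∈ C, IsFixedPt T a ∧ Tendsto x atTop (𝓝 a) := by
  have hfejer : FejerMonotone (C ∩ fixedPoints T) x := hpara.fejerMonotone hx hstep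
  obtain ⟨a, haC, hclu⟩ :=
    exists_mapClusterPt_of_isBounded_range (l := atTop) hcomp hx (hfejer.isBounded_range hfix)
  have hTa : IsFixedPt T a :=
    hpara.isFixedPt_of_mapClusterPt hfix hx hstep haC (hTcont a haC) hclu
  exact ⟨a, haC, hTa, hfejer.tendsto_of_mapClusterPt ⟨haC, hTa⟩ hclu⟩

theorem stmt_13 {X : Type*} [MetricSpace X] (C : Set X) (hCne : C.Nonempty)
    (hCcl : IsClosed C) (θ : X) (hθ : θ ∈ C)
    (hcomp : ∀ M > (0:ℝ), IsCompact (Metric.closedBall θ M ∩ C))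
    (T : X → X) (hTmaps : Set.MapsTo T C C) (hTcont : ContinuousOn T C)
    (hpara : ∀ z ∈ C, T z = z → ∀ x ∈ C,
      dist z (T x) ≤ dist z x ∧ (T x ≠ x → dist z (T x) < dist z x))
    (hfix : ∃ z ∈ C, T z = z)
    (x : ℕ → X) (hx : ∀ t, x t ∈ C)
    (hstep : ∀ t, x (t + 1) = T (x t)) :
    ∃ xs ∈ C, T xs = xs ∧ Filter.Tendsto x Filter.atTop (nhds xs) :=
  stmt_13_general hcomp hTcont hpara hfix hx hstep
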